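/- For every real number y with |y| ≤ π, (16/(3π²))·y² ≤ (1/6)·cos(2y) − (8/3)·cos(y) + 5/2. In particular, (1/π²)·y² ≤ (1/6)·cos(2y) − (8/3)·cos(y) + 5/2 for all |y| ≤ π, so for every h > 0 and every ξ with |ξ| ≤ π/h one has (1/π²)·ξ² ≤ ψ_h^{(4)}(ξ). -/

import Mathlib

/-- Discrete symbol of the fourth-order (p = 4) central finite difference
approximation of `-d²/dx²`. -/
noncomputable def psi4 (h ξ : ℝ) : ℝ :=
  ((1/6) * Real.cos (2*ξ*h) - (8/3) * Real.cos (ξ*h) + 5/2) / h^2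

/-!
The symbol factors as `(1 - cos y) * (7 - cos y) / 3`, which decreases in `cos y`, so upper bounds
on `cos y` suffice. Put `u = |y| / π`. For `u ≤ 1/2`, concavity of the sine gives
`cos y ≤ 1 - 4 * u ^ 2`, and the symbol is at least `2 * (1 - cos y) ≥ 8 * u ^ 2`. For
`1/2 ≤ u ≤ 1`, Jordan's inequality gives `cos y ≤ 1 - 2 * u`, and the symbol is at least
`2 * u * (6 + 2 * u) / 3 ≥ 16/3 * u ^ 2`, with equality at `u = 1`.
-/

open Real

theorem mul_sin_le_sin_mul {t a : ℝ} (ht₀ : 0 ≤ t) (ht₁ : t ≤ 1) (ha₀ : 0 ≤ a) (ha : a ≤ π) :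
    t * sin a ≤ sin (t * a) := by
  simpa using strictConcaveOn_sin_Icc.concaveOn.2 ⟨le_rfl, pi_nonneg⟩ ⟨ha₀, ha⟩
    (sub_nonneg.2 ht₁) ht₀ (sub_add_cancel 1 t)

theorem sq_mul_one_sub_cos_le_one_sub_cos_mul {t a : ℝ} (ht : |t| ≤ 1) (ha : |a| ≤ 2 * π) :
    t ^ 2 * (1 - cos a) ≤ 1 - cos (t * a) := by
  have one_sub_cos (x : ℝ) : 1 - cos x = 2 * sin (|x| / 2) ^ 2 := by
    rw [sin_sq_eq_half_sub, mul_div_cancel₀ _ two_ne_zero, cos_abs]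
    ring
  have sin_half_nonneg : 0 ≤ sin (|a| / 2) :=
    sin_nonneg_of_nonneg_of_le_pi (by positivity) (by linarith)
  have sin_half_le : |t| * sin (|a| / 2) ≤ sin (|t * a| / 2) := by
    rw [abs_mul, mul_div_assoc]
    exact mul_sin_le_sin_mul (abs_nonneg t) ht (by positivity) (by linarith)
  calc t ^ 2 * (1 - cos a) = 2 * (|t| * sin (|a| / 2)) ^ 2 := by
        rw [one_sub_cos, mul_pow, sq_abs]; ring
    _ ≤ 2 * sin (|t * a| / 2) ^ 2 := by gcongr
    _ = 1 - cos (t * a) := (one_sub_cos _).symm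

theorem cos_le_one_sub_four_mul_sq {y : ℝ} (hy : |y| ≤ π / 2) :
    cos y ≤ 1 - 4 * (|y| / π) ^ 2 := by
  have ratio_le : |y / (π / 2)| ≤ 1 := by
    rwa [abs_div, abs_of_pos pi_div_two_pos, div_le_one pi_div_two_pos]
  have angle_le : |π / 2| ≤ 2 * π := by
    rw [abs_of_pos pi_div_two_pos]
    linarith [pi_pos]
  have chord := sq_mul_one_sub_cos_le_one_sub_cos_mul ratio_le angle_le
  rw [cos_pi_div_two, div_mul_cancel₀ y pi_div_two_pos.ne'] at chord
  have ratio_sq : (y / (π / 2)) ^ 2 = 4 * (|y| / π) ^ 2 := by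
    simp only [div_pow, sq_abs]
    field
  linarith

theorem cos_le_one_sub_two_mul {y : ℝ} (hy₁ : π / 2 ≤ |y|) (hy₂ : |y| ≤ π) :
    cos y ≤ 1 - 2 * (|y| / π) := by
  have reflected : 1 - 2 / π * (π - |y|) ≤ cos (π - |y|) :=
    one_sub_mul_le_cos (by linarith) (by linarith)
  rw [cos_pi_sub, cos_abs, mul_sub, div_mul_cancel₀ 2 pi_ne_zero, div_mul_eq_mul_div,
    mul_div_assoc] at reflected
  linarith

theorem fourth_order_symbol_eq (y : ℝ) :
    (1/6) * cos (2 * y) - (8/3) * cos y + 5/2 = (1 - cos y) * (7 - cos y) / 3 := by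
  rw [cos_two_mul]
  ring

theorem mul_sq_le_fourth_order_symbol {y : ℝ} (hy : |y| ≤ π) :
    16 / (3 * π ^ 2) * y ^ 2 ≤ (1/6) * cos (2 * y) - (8/3) * cos y + 5/2 := by
  have scaled : 16 / (3 * π ^ 2) * y ^ 2 = 16 / 3 * (|y| / π) ^ 2 := by
    rw [div_pow, sq_abs]
    field
  rw [fourth_order_symbol_eq, scaled]
  set u := |y| / π
  rcases le_total |y| (π / 2) with hy_half | hy_half
  · have hcos : cos y ≤ 1 - 4 * u ^ 2 := cos_le_one_sub_four_mul_sq hy_half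
    calc 16 / 3 * u ^ 2 ≤ 4 * u ^ 2 * 6 / 3 := by linarith [sq_nonneg u]
      _ ≤ (1 - cos y) * (7 - cos y) / 3 := by
        gcongr
        · linarith [cos_le_one y]
        · linarith
        · linarith [cos_le_one y]
  · have hcos : cos y ≤ 1 - 2 * u := cos_le_one_sub_two_mul hy_half hy
    have hu₀ : 0 ≤ u := by positivity
    have hu₁ : u ≤ 1 := div_le_one_of_le₀ hy pi_nonneg
    calc 16 / 3 * u ^ 2 ≤ 2 * u * (6 + 2 * u) / 3 := by
          linarith [mul_le_of_le_one_right hu₀ hu₁]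
      _ ≤ (1 - cos y) * (7 - cos y) / 3 := by
        gcongr
        · linarith [cos_le_one y]
        · linarith
        · linarith

theorem mul_sq_le_psi4 {h ξ : ℝ} (hh : h ≠ 0) (hξ : |ξ * h| ≤ π) :
    16 / (3 * π ^ 2) * ξ ^ 2 ≤ psi4 h ξ := by
  rw [psi4, le_div_iff₀ (by positivity), mul_assoc, ← mul_pow, mul_assoc 2]
  exact mul_sq_le_fourth_order_symbol hξ

/-- For `|y| ≤ π` one has `(16/(3π²))y² ≤ (1/6)cos(2y) − (8/3)cos(y) + 5/2`;
in particular `(1/π²)y² ≤ (1/6)cos(2y) − (8/3)cos(y) + 5/2` for `|y| ≤ π`, so for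
every `h > 0` and `|ξ| ≤ π/h` one has `(1/π²)ξ² ≤ ψ_h^{(4)}(ξ)`. -/
theorem fourth_order_symbol_lower_bound :
    (∀ y : ℝ, |y| ≤ Real.pi →
      (16/(3*Real.pi^2)) * y^2 ≤ (1/6) * Real.cos (2*y) - (8/3) * Real.cos y + 5/2) ∧
    (∀ y : ℝ, |y| ≤ Real.pi →
      (1/Real.pi^2) * y^2 ≤ (1/6) * Real.cos (2*y) - (8/3) * Real.cos y + 5/2) ∧
    (∀ h : ℝ, 0 < h → ∀ ξ : ℝ, |ξ| ≤ Real.pi / h →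
      (1/Real.pi^2) * ξ^2 ≤ psi4 h ξ) := by
  have weaken (x : ℝ) : 1 / π ^ 2 * x ^ 2 ≤ 16 / (3 * π ^ 2) * x ^ 2 := by
    rw [← div_div]
    gcongr
    norm_num
  refine ⟨fun y hy ↦ mul_sq_le_fourth_order_symbol hy,
    fun y hy ↦ (weaken y).trans (mul_sq_le_fourth_order_symbol hy), fun h hh ξ hξ ↦ ?_⟩
  have hξh : |ξ * h| ≤ π := by rwa [abs_mul, abs_of_pos hh, ← le_div_iff₀ hh]
  exact (weaken ξ).trans (mul_sq_le_psi4 hh.ne' hξh)
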